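/- Let A, B ⊆ C. Then the partial order 𝒫(A,B) satisfies the countable chain condition: every set of pairwise incompatible conditions is countable. -/

import Mathlib

/-- `D_η = {σ : ℕ → Bool | ∀ n, σ (2n) = η n}` in Cantor space. -/
def DsetB (η : ℕ → Bool) : Set (ℕ → Bool) := {σ | ∀ n, σ (2 * n) = η n}

/-- `b_η` is the element of `D_η` with `b_η (2n) = η n` and `b_η (2n+1) = 1`. -/
def bfun (η : ℕ → Bool) : ℕ → Bool := fun n => if n % 2 = 0 then η (n / 2) else true

/-- `S_η`: elements of `D_η` with `σ (2n+1) = 0` for all but finitely many `n`,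
together with the extra point `b_η`. -/
def SsetB (η : ℕ → Bool) : Set (ℕ → Bool) :=
  {σ | σ ∈ DsetB η ∧ {n | σ (2 * n + 1) ≠ false}.Finite} ∪ {bfun η}

/-- `C = ⋃_η S_η`. -/
def CsetB : Set (ℕ → Bool) := ⋃ η : ℕ → Bool, SsetB η

/-- `E_i (σ, τ)` holds iff `σ` and `τ` agree below `i`. -/
def Erel (i : ℕ) (σ τ : ℕ → Bool) : Prop := ∀ k < i, σ k = τ k

/-- A set `M ⊆ C` is amenable if whenever some element of `S_η` agrees with a finite
sequence `s` on all indices below `n`, some element of `M ∩ S_η` does as well. -/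
def AmenableB (M : Set (ℕ → Bool)) : Prop :=
  ∀ (η : ℕ → Bool) (n : ℕ) (s : Fin n → Bool),
    (∃ ν ∈ SsetB η, ∀ k : Fin n, ν k = s k) →
    ∃ ν ∈ M ∩ SsetB η, ∀ k : Fin n, ν k = s k

/-- A condition in the forcing `𝒫(A,B)`: a finite partial injection from `A` to `B`
(given by its graph) preserving each `E_i` and each predicate `S_η`. -/
structure CondB (A B : Set (ℕ → Bool)) where
  graph : Set ((ℕ → Bool) × (ℕ → Bool))
  finite : graph.Finite
  dom_sub : ∀ ⦃x y⦄, (x, y) ∈ graph → x ∈ A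
  ran_sub : ∀ ⦃x y⦄, (x, y) ∈ graph → y ∈ B
  functional : ∀ ⦃x y y'⦄, (x, y) ∈ graph → (x, y') ∈ graph → y = y'
  injective : ∀ ⦃x x' y⦄, (x, y) ∈ graph → (x', y) ∈ graph → x = x'
  epres : ∀ ⦃x y x' y'⦄ (i : ℕ), (x, y) ∈ graph → (x', y') ∈ graph →
    (Erel i x x' ↔ Erel i y y')
  spres : ∀ ⦃x y⦄ (η : ℕ → Bool), (x, y) ∈ graph → (x ∈ SsetB η ↔ y ∈ SsetB η)

/-- Two conditions are compatible if some condition extends both. -/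
def CompatibleB {A B : Set (ℕ → Bool)} (p q : CondB A B) : Prop :=
  ∃ r : CondB A B, p.graph ⊆ r.graph ∧ q.graph ⊆ r.graph

/-!
A point of `C` is determined by its even coordinates, which a condition preserves, and its odd
coordinates, of which only countably many sequences occur. Attach to a condition `p` a level `n` at
which distinct points of its domain already differ, together with the finite set of types of the
pairs `(x, y)` in its graph, the type consisting of the first `n` coordinates and all odd
coordinates of `x` and `y`. Only countably many values occur, and finitely many conditions with the
same value have a common extension: given `(x, y)` in the graph of `p` and `(x', y')` in that of
`q`, choose `(u, v)` in the graph of `p` with the type of `(x', y')`. If `u ≠ x`, then `x` and `x'`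
differ first where `x` and `u` do, and likewise for `y`, `y'` and `v`; if `u = x`, then `x` and `x'`
differ only at even coordinates, where they coincide with `y` and `y'`.
-/

namespace Erel

variable {m n : ℕ} {x y z : ℕ → Bool}

theorem refl (n : ℕ) (x : ℕ → Bool) : Erel n x x := fun _ _ => rfl

theorem symm (h : Erel n x y) : Erel n y x := fun k hk => (h k hk).symm

theorem trans (hxy : Erel n x y) (hyz : Erel n y z) : Erel n x z :=
  fun k hk => (hxy k hk).trans (hyz k hk)

theorem mono (hmn : m ≤ n) (h : Erel n x y) : Erel m x y := fun k hk => h k (hk.trans_le hmn)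

theorem eq_of_forall (h : ∀ i, Erel i x y) : x = y := funext fun k => h (k + 1) k k.lt_succ_self

/-- Every triangle is isosceles in an ultrametric space. -/
theorem congr_right_of_not (hyz : Erel n y z) (hxz : ¬ Erel n x z) (i : ℕ) :
    Erel i x y ↔ Erel i x z := by
  rcases le_total i n with hin | hni
  · exact ⟨fun h => h.trans (hyz.mono hin), fun h => h.trans (hyz.mono hin).symm⟩
  · exact ⟨fun h => absurd ((h.mono hni).trans hyz) hxz, fun h => absurd (h.mono hni) hxz⟩

theorem exists_separating_level {F : Set (ℕ → Bool)} (hF : F.Finite) :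
    ∃ n, ∀ x ∈ F, ∀ y ∈ F, Erel n x y → x = y := by
  obtain ⟨n, hn⟩ := ((hF.prod hF).image fun z => PiNat.firstDiff z.1 z.2).bddAbove
  refine ⟨n + 1, fun x hx y hy hxy => by_contra fun hne => ?_⟩
  have hle : PiNat.firstDiff x y ≤ n := hn ⟨(x, y), ⟨hx, hy⟩, rfl⟩
  exact PiNat.apply_firstDiff_ne hne (hxy _ (Nat.lt_succ_of_le hle))

end Erel

/-- The odd coordinates of a point of Cantor space. On a fixed `D_η` they determine the point. -/
def oddPart (x : ℕ → Bool) : ℕ → Bool := fun n => x (2 * n + 1)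

theorem erel_iff_of_oddPart_eq {x y : ℕ → Bool} (h : oddPart x = oddPart y) (i : ℕ) :
    Erel i x y ↔ ∀ k, 2 * k < i → x (2 * k) = y (2 * k) := by
  refine ⟨fun hxy k => hxy (2 * k), fun heven k hk => ?_⟩
  obtain ⟨m, rfl | rfl⟩ := Nat.even_or_odd' k
  · exact heven m hk
  · exact congrFun h m

theorem SsetB_subset_DsetB (η : ℕ → Bool) : SsetB η ⊆ DsetB η := by
  rintro x (⟨hx, -⟩ | rfl)
  · exact hx
  · intro n
    simp [bfun]

theorem countable_setOf_finite_support (α : Type*) [Countable α] :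
    {s : α → Bool | {a | s a ≠ false}.Finite}.Countable := by
  classical
  refine (Set.countable_range fun (t : Finset α) a => decide (a ∈ t)).mono fun s hs => ?_
  exact ⟨hs.toFinset, funext fun a => by simp⟩

theorem countable_oddPart_image_CsetB : (oddPart '' CsetB).Countable := by
  refine ((countable_setOf_finite_support ℕ).union
    (Set.countable_singleton fun _ => true)).mono ?_
  rintro _ ⟨x, hx, rfl⟩
  obtain ⟨η, ⟨-, hfin⟩ | rfl⟩ := Set.mem_iUnion.1 hx
  · exact Or.inl hfin
  · exact Or.inr (funext fun n => by simp [oddPart, bfun])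

/-- The type at level `n` of a pair of points: the first `n` coordinates and all odd coordinates
of both. -/
def pairType (n : ℕ) (a : (ℕ → Bool) × (ℕ → Bool)) :
    (List Bool × List Bool) × ((ℕ → Bool) × (ℕ → Bool)) :=
  ((PiNat.res a.1 n, PiNat.res a.2 n), (oddPart a.1, oddPart a.2))

theorem pairType_eq_iff {n : ℕ} {x y x' y' : ℕ → Bool} :
    pairType n (x, y) = pairType n (x', y') ↔
      (Erel n x x' ∧ Erel n y y') ∧ oddPart x = oddPart x' ∧ oddPart y = oddPart y' := by
  simp only [pairType, Prod.mk.injEq, PiNat.res_eq_res, Erel]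

namespace CondB

variable {A B : Set (ℕ → Bool)}

/-- Two conditions are coherent if they preserve the relations `E_i` between a point of the domain
of the first and a point of the domain of the second. -/
def Coherent (p q : CondB A B) : Prop :=
  ∀ ⦃x y x' y'⦄ (i : ℕ), (x, y) ∈ p.graph → (x', y') ∈ q.graph → (Erel i x x' ↔ Erel i y y')

theorem exists_common_extension {F : Set (CondB A B)} (hF : F.Finite)
    (hcoh : ∀ p ∈ F, ∀ q ∈ F, Coherent p q) :
    ∃ r : CondB A B, ∀ p ∈ F, p.graph ⊆ r.graph := by
  have hepres : ∀ ⦃x y x' y'⦄ (i : ℕ), (x, y) ∈ ⋃ p ∈ F, p.graph →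
      (x', y') ∈ ⋃ p ∈ F, p.graph → (Erel i x x' ↔ Erel i y y') := by
    intro x y x' y' i h h'
    obtain ⟨p, hp, hxy⟩ := Set.mem_iUnion₂.1 h
    obtain ⟨q, hq, hxy'⟩ := Set.mem_iUnion₂.1 h'
    exact hcoh p hp q hq i hxy hxy'
  refine ⟨{
    graph := ⋃ p ∈ F, p.graph
    finite := hF.biUnion fun p _ => p.finite
    dom_sub := fun x y h => ?_
    ran_sub := fun x y h => ?_
    functional := fun x y y' h h' => Erel.eq_of_forall fun i => (hepres i h h').1 (.refl i x)
    injective := fun x x' y h h' => Erel.eq_of_forall fun i => (hepres i h h').2 (.refl i y)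
    epres := hepres
    spres := fun x y η h => ?_ }, fun p hp => Set.subset_biUnion_of_mem (u := graph) hp⟩
  all_goals obtain ⟨p, -, hxy⟩ := Set.mem_iUnion₂.1 h
  · exact p.dom_sub hxy
  · exact p.ran_sub hxy
  · exact p.spres η hxy

theorem ran_mem_CsetB (hAC : A ⊆ CsetB) (p : CondB A B) {x y : ℕ → Bool}
    (h : (x, y) ∈ p.graph) : y ∈ CsetB := by
  obtain ⟨η, hx⟩ := Set.mem_iUnion.1 (hAC (p.dom_sub h))
  exact Set.mem_iUnion.2 ⟨η, (p.spres η h).1 hx⟩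

theorem even_eq (hAC : A ⊆ CsetB) (p : CondB A B) {x y : ℕ → Bool}
    (h : (x, y) ∈ p.graph) (k : ℕ) : x (2 * k) = y (2 * k) := by
  obtain ⟨η, hx⟩ := Set.mem_iUnion.1 (hAC (p.dom_sub h))
  have hy : y ∈ SsetB η := (p.spres η h).1 hx
  rw [SsetB_subset_DsetB η hx k, SsetB_subset_DsetB η hy k]

theorem coherent_of_pairType_image_subset (hAC : A ⊆ CsetB) {p q : CondB A B} {n : ℕ}
    (hsep : ∀ x ∈ Prod.fst '' p.graph, ∀ u ∈ Prod.fst '' p.graph, Erel n x u → x = u)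
    (htype : pairType n '' q.graph ⊆ pairType n '' p.graph) : Coherent p q := by
  intro x y x' y' i hxy hxy'
  obtain ⟨⟨u, v⟩, huv, heq⟩ := htype ⟨_, hxy', rfl⟩
  obtain ⟨⟨hu, hv⟩, hu_odd, hv_odd⟩ := pairType_eq_iff.1 heq
  by_cases hxu : Erel n x u
  · obtain rfl : x = u := hsep _ ⟨_, hxy, rfl⟩ _ ⟨_, huv, rfl⟩ hxu
    obtain rfl : y = v := p.functional hxy huv
    simp only [erel_iff_of_oddPart_eq hu_odd, erel_iff_of_oddPart_eq hv_odd,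
      p.even_eq hAC hxy, q.even_eq hAC hxy']
  · have hyv : ¬ Erel n y v := (p.epres n hxy huv).not.1 hxu
    calc Erel i x x' ↔ Erel i x u := Erel.congr_right_of_not hu.symm hxu i
      _ ↔ Erel i y v := p.epres i hxy huv
      _ ↔ Erel i y y' := (Erel.congr_right_of_not hv.symm hyv i).symm

theorem exists_countable_pairType_image (hAC : A ⊆ CsetB) :
    ∃ T : Set (Set ((List Bool × List Bool) × ((ℕ → Bool) × (ℕ → Bool)))),
      T.Countable ∧ ∀ (n : ℕ) (p : CondB A B), pairType n '' p.graph ∈ T := by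
  have hodd := countable_oddPart_image_CsetB
  refine ⟨_, Set.countable_ofPred_finite_subset
    ((Set.countable_univ (α := List Bool × List Bool)).prod (hodd.prod hodd)), fun n p => ?_⟩
  refine ⟨p.finite.image _, ?_⟩
  rintro _ ⟨⟨x, y⟩, hxy, rfl⟩
  exact ⟨Set.mem_univ _, ⟨x, hAC (p.dom_sub hxy), rfl⟩, ⟨y, p.ran_mem_CsetB hAC hxy, rfl⟩⟩

end CondB

/-- The forcing `𝒫(A,B)` is σ-centered: it is covered by countably many sets, the fibers of `c`,
any finite subset of which has a common extension. -/
def SigmaCenteredB (A B : Set (ℕ → Bool)) : Prop :=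
  ∃ c : CondB A B → ℕ, ∀ (k : ℕ) (F : Set (CondB A B)), F.Finite → (∀ p ∈ F, c p = k) →
    ∃ r : CondB A B, ∀ p ∈ F, p.graph ⊆ r.graph

theorem SigmaCenteredB.countable_of_pairwise_incompatible {A B : Set (ℕ → Bool)}
    (h : SigmaCenteredB A B) {S : Set (CondB A B)}
    (hS : ∀ p ∈ S, ∀ q ∈ S, p ≠ q → ¬ CompatibleB p q) : S.Countable := by
  obtain ⟨c, hc⟩ := h
  refine Set.countable_iff_exists_injOn.2 ⟨c, fun p hp q hq hpq => by_contra fun hne => ?_⟩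
  obtain ⟨r, hr⟩ := hc (c q) {p, q} (Set.toFinite _) (by simp [hpq])
  exact hS p hp q hq hne ⟨r, hr p (by simp), hr q (by simp)⟩

/-- σ-centeredness strengthens the countable chain condition. -/
theorem condB_ccc_general {A B : Set (ℕ → Bool)} (hAC : A ⊆ CsetB) : SigmaCenteredB A B := by
  choose level hsep using fun p : CondB A B =>
    Erel.exists_separating_level (p.finite.image Prod.fst)
  obtain ⟨T, hT, hmem⟩ := CondB.exists_countable_pairType_image (B := B) hAC
  obtain ⟨e, he⟩ := Set.countable_iff_exists_injOn.1 ((Set.countable_univ (α := ℕ)).prod hT)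
  refine ⟨fun p => e (level p, pairType (level p) '' p.graph), fun k F hF hFk =>
    CondB.exists_common_extension hF fun p hp q hq => ?_⟩
  obtain ⟨hlevel, htype⟩ := Prod.mk.inj <| he ⟨Set.mem_univ _, hmem _ p⟩ ⟨Set.mem_univ _, hmem _ q⟩
    ((hFk p hp).trans (hFk q hq).symm)
  rw [← hlevel] at htype
  exact CondB.coherent_of_pairType_image_subset hAC (hsep p) htype.ge

/-- For `A, B ⊆ C`, the forcing `𝒫(A,B)` satisfies the countable chain condition:
every set of pairwise incompatible conditions is countable. -/
theorem condB_ccc (A B : Set (ℕ → Bool)) (hAC : A ⊆ CsetB) (hBC : B ⊆ CsetB) :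
    ∀ S : Set (CondB A B),
      (∀ p ∈ S, ∀ q ∈ S, p ≠ q → ¬ CompatibleB p q) → S.Countable :=
  fun _ hS => (condB_ccc_general hAC).countable_of_pairwise_incompatible hS
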